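/- arXiv:1508.06061 — 2 statements merged into one kernel-verified Lean document; each statement's English description precedes it below -/
import Mathlib

section
/- Let X be a real random variable whose distribution is unimodal with mode m (for some m ∈ ℝ), with mean 0 and variance 1. Then for every k with 0 ≤ k < √(5/3), the probability that X ≥ k is at most 1 - (4/3)·k²/(1+k²). (One-sided Vysochanskij–Petunin inequality, small-threshold branch.) -/
open MeasureTheory

/-- A probability measure on `ℝ` is unimodal with mode `m` if it is absolutely continuous with
respect to Lebesgue measure with a density that is nondecreasing on `(-∞, m]` and nonincreasing
on `[m, ∞)`. -/
def IsUnimodalWithMode (P : Measure ℝ) (m : ℝ) : Prop :=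
  ∃ f : ℝ → ENNReal, P = volume.withDensity f ∧
    MonotoneOn f (Set.Iic m) ∧ AntitoneOn f (Set.Ici m)

/-!
By layer cake, a unimodal law with mode `m` is a mixture of uniform laws on intervals containing
`m`. So `∫ g ∂P ≤ ∫ h ∂P` as soon as `∫ x in a..b, g x ≤ ∫ x in a..b, h x` for all `a ≤ m ≤ b`.
Taking for `g` the indicator of `{x | r ≤ |x - c|}` and for `h` a suitable quadratic yields the
two-sided Vysochanskij–Petunin inequality around an arbitrary centre `c`, not only around the mean.
As in the proof of Cantelli's inequality, the centre is then moved below the mean `μ`: for the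
threshold `μ + t` and variance `v`, use the centre `μ - v / t` and the radius `t + v / t`. For
variance `1`, the condition `k² ≤ 5 / 3` decides which of the two branches of the bound is larger.
-/

open ProbabilityTheory Set
open scoped ENNReal

section Unimodal

variable {α β : Type*} [LinearOrder α] [Preorder β] {f : α → β} {m : α}

theorem ordConnected_setOf_lt_of_monotoneOn_of_antitoneOn
    (hmono : MonotoneOn f (Iic m)) (hanti : AntitoneOn f (Ici m)) (t : β) :
    OrdConnected {x | t < f x} := by
  refine ⟨fun x (hx : t < f x) y (hy : t < f y) z hz => ?_⟩
  rcases le_total z m with hzm | hmz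
  · exact hx.trans_le (hmono (hz.1.trans hzm) hzm hz.1)
  · exact hy.trans_le (hanti hmz (hmz.trans hz.2) hz.2)

theorem le_apply_of_monotoneOn_of_antitoneOn
    (hmono : MonotoneOn f (Iic m)) (hanti : AntitoneOn f (Ici m)) (x : α) : f x ≤ f m := by
  rcases le_total x m with hxm | hmx
  · exact hmono hxm self_mem_Iic hxm
  · exact hanti self_mem_Ici hmx hmx

end Unimodal

theorem exists_ae_eq_Ioc_of_ordConnected {S : Set ℝ} {m : ℝ} (hS : S.OrdConnected) (hm : m ∈ S)
    (hfin : volume S ≠ ∞) : ∃ a ≤ m, ∃ b ≥ m, S =ᵐ[volume] Ioc a b := by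
  have hball : S ⊆ Metric.closedBall m (volume.real S) := fun x hx => by
    have hle : volume.real (uIcc m x) ≤ volume.real S :=
      measureReal_mono (hS.uIcc_subset hm hx) hfin
    rwa [measureReal_def, Real.volume_interval, ENNReal.toReal_ofReal (abs_nonneg _)] at hle
  have hbdd : Bornology.IsBounded S := Metric.isBounded_closedBall.subset hball
  have hconn : IsConnected S := ⟨⟨m, hm⟩, hS.isPreconnected⟩
  refine ⟨sInf S, csInf_le hbdd.bddBelow hm, sSup S, le_csSup hbdd.bddAbove hm, ?_⟩
  have hle : S ≤ᵐ[volume] Ioc (sInf S) (sSup S) :=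
    (subset_Icc_csInf_csSup hbdd.bddBelow hbdd.bddAbove).eventuallyLE.trans Ioc_ae_eq_Icc.symm.le
  have hge : Ioc (sInf S) (sSup S) ≤ᵐ[volume] S :=
    Ioo_ae_eq_Ioc.symm.le.trans
      (hconn.Ioo_csInf_csSup_subset hbdd.bddBelow hbdd.bddAbove).eventuallyLE
  exact hle.antisymm hge

section Density

variable {f : ℝ → ℝ≥0∞} {m : ℝ}

theorem measurable_of_monotoneOn_of_antitoneOn
    (hmono : MonotoneOn f (Iic m)) (hanti : AntitoneOn f (Ici m)) : Measurable f :=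
  measurable_of_Ioi fun t =>
    (ordConnected_setOf_lt_of_monotoneOn_of_antitoneOn hmono hanti t).measurableSet

theorem exists_setOf_lt_ae_eq_Ioc
    (hmono : MonotoneOn f (Iic m)) (hanti : AntitoneOn f (Ici m)) (hf : ∫⁻ x, f x ≠ ∞)
    {t : ℝ≥0∞} (ht : t ≠ 0) : ∃ a ≤ m, ∃ b ≥ m, {x | t < f x} =ᵐ[volume] Ioc a b := by
  by_cases hm : t < f m
  · have hmarkov : volume {x | t ≤ f x} ≤ (∫⁻ x, f x) / t :=
      meas_ge_le_lintegral_div (measurable_of_monotoneOn_of_antitoneOn hmono hanti).aemeasurable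
        ht hm.ne_top
    have hfin : volume {x | t < f x} ≠ ∞ :=
      measure_ne_top_of_subset (fun x (hx : t < f x) => hx.le)
        (hmarkov.trans_lt (ENNReal.div_lt_top hf ht)).ne
    exact exists_ae_eq_Ioc_of_ordConnected
      (ordConnected_setOf_lt_of_monotoneOn_of_antitoneOn hmono hanti t) hm hfin
  · have hempty : {x | t < f x} = ∅ := eq_empty_of_forall_notMem fun x (hx : t < f x) =>
      hm (hx.trans_le (le_apply_of_monotoneOn_of_antitoneOn hmono hanti x))
    exact ⟨m, le_rfl, m, le_rfl, by rw [hempty, Ioc_self]; exact Filter.EventuallyEq.rfl⟩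

end Density

section LayerCake

variable {Ω : Type*} [MeasurableSpace Ω] {μ : Measure Ω}

theorem lintegral_withDensity_eq_lintegral_setLIntegral_lt {f g : Ω → ℝ≥0∞}
    (hf : Measurable f) (hfin : ∀ᵐ x ∂μ, f x < ∞) (hg : AEMeasurable g μ) :
    ∫⁻ x, g x ∂μ.withDensity f =
      ∫⁻ t in Ioi (0 : ℝ), ∫⁻ x in {x | ENNReal.ofReal t < f x}, g x ∂μ := by
  have hswap : ∫⁻ x, g x ∂μ.withDensity f =
      ∫⁻ x, ENNReal.ofReal (f x).toReal ∂μ.withDensity g := by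
    rw [lintegral_withDensity_eq_lintegral_mul₀ hf.aemeasurable hg,
      lintegral_withDensity_eq_lintegral_mul₀ hg (by fun_prop)]
    refine lintegral_congr_ae ?_
    filter_upwards [hfin] with x hx
    simp only [Pi.mul_apply, ENNReal.ofReal_toReal hx.ne, mul_comm]
  rw [hswap, lintegral_eq_lintegral_meas_lt _ (ae_of_all _ fun _ => ENNReal.toReal_nonneg)
    (by fun_prop)]
  refine setLIntegral_congr_fun measurableSet_Ioi fun t (ht : 0 < t) => ?_
  rw [← withDensity_apply _ (measurableSet_lt measurable_const hf)]
  refine measure_congr ?_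
  filter_upwards [(withDensity_absolutelyContinuous μ g).ae_le hfin] with x hx
  exact propext (ENNReal.ofReal_lt_iff_lt_toReal ht.le hx.ne).symm

theorem integral_nonneg_iff_lintegral_ofReal_neg_le {h : Ω → ℝ} (hh : Integrable h μ) :
    0 ≤ ∫ x, h x ∂μ ↔ ∫⁻ x, ENNReal.ofReal (-h x) ∂μ ≤ ∫⁻ x, ENNReal.ofReal (h x) ∂μ := by
  rw [integral_eq_lintegral_pos_part_sub_lintegral_neg_part hh, sub_nonneg]
  exact ENNReal.toReal_le_toReal hh.neg.lintegral_lt_top.ne hh.lintegral_lt_top.ne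

end LayerCake

theorem intervalIntegrable_of_locallyIntegrable {E : Type*} [NormedAddCommGroup E] {h : ℝ → E}
    {μ : Measure ℝ} (hh : LocallyIntegrable h μ) (a b : ℝ) : IntervalIntegrable h μ a b :=
  (hh.integrableOn_isCompact isCompact_uIcc).intervalIntegrable

namespace IsUnimodalWithMode

variable {P : Measure ℝ} {m : ℝ}

theorem integral_nonneg [IsFiniteMeasure P] (hP : IsUnimodalWithMode P m) {h : ℝ → ℝ}
    (hloc : LocallyIntegrable h volume) (hint : Integrable h P)
    (hinterval : ∀ a ≤ m, ∀ b ≥ m, 0 ≤ ∫ x in a..b, h x) : 0 ≤ ∫ x, h x ∂P := by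
  obtain ⟨f, rfl, hmono, hanti⟩ := hP
  have hf : Measurable f := measurable_of_monotoneOn_of_antitoneOn hmono hanti
  have hmass : ∫⁻ x, f x ≠ ∞ := by
    rw [← setLIntegral_univ, ← withDensity_apply _ MeasurableSet.univ]
    exact measure_ne_top _ _
  have hfin : ∀ᵐ x, f x < ∞ := ae_lt_top hf hmass
  have hmeas : AEMeasurable h volume := hloc.aestronglyMeasurable.aemeasurable
  rw [integral_nonneg_iff_lintegral_ofReal_neg_le hint,
    lintegral_withDensity_eq_lintegral_setLIntegral_lt hf hfin hmeas.fun_neg.ennreal_ofReal,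
    lintegral_withDensity_eq_lintegral_setLIntegral_lt hf hfin hmeas.ennreal_ofReal]
  refine setLIntegral_mono' measurableSet_Ioi fun t (ht : 0 < t) => ?_
  obtain ⟨a, ha, b, hb, hlevel⟩ :=
    exists_setOf_lt_ae_eq_Ioc hmono hanti hmass (ENNReal.ofReal_pos.2 ht).ne'
  rw [setLIntegral_congr hlevel, setLIntegral_congr hlevel,
    ← integral_nonneg_iff_lintegral_ofReal_neg_le
      (intervalIntegrable_of_locallyIntegrable hloc a b).1,
    ← intervalIntegral.integral_of_le (ha.trans hb)]
  exact hinterval a ha b hb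

theorem integral_mono [IsFiniteMeasure P] (hP : IsUnimodalWithMode P m) {g h : ℝ → ℝ}
    (hgloc : LocallyIntegrable g volume) (hhloc : LocallyIntegrable h volume)
    (hg : Integrable g P) (hh : Integrable h P)
    (hinterval : ∀ a ≤ m, ∀ b ≥ m, ∫ x in a..b, g x ≤ ∫ x in a..b, h x) :
    ∫ x, g x ∂P ≤ ∫ x, h x ∂P := by
  have hsub : 0 ≤ ∫ x, (h x - g x) ∂P := by
    refine hP.integral_nonneg (hhloc.sub hgloc) (hh.sub hg) fun a ha b hb => ?_
    rw [intervalIntegral.integral_sub (intervalIntegrable_of_locallyIntegrable hhloc a b)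
      (intervalIntegrable_of_locallyIntegrable hgloc a b), sub_nonneg]
    exact hinterval a ha b hb
  rwa [integral_sub hh hg, sub_nonneg] at hsub

end IsUnimodalWithMode

/-- The projection of `x` onto the interval `[-r, r]`. For `0 ≤ r`, the function `x - clamp r x` is
an antiderivative of the indicator of `{x | r ≤ |x|}`. -/
def clamp (r x : ℝ) : ℝ := max (-r) (min r x)

section Clamp

variable {r x : ℝ}

theorem clamp_of_le (hr : 0 ≤ r) (hx : r ≤ x) : clamp r x = r := by
  rw [clamp, min_eq_left hx, max_eq_right (by linarith)]

theorem clamp_of_le_neg (hr : 0 ≤ r) (hx : x ≤ -r) : clamp r x = -r := by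
  rw [clamp, min_eq_right (by linarith), max_eq_left hx]

theorem clamp_of_abs_le (hx : |x| ≤ r) : clamp r x = x := by
  rw [clamp, min_eq_right (abs_le.1 hx).2, max_eq_right (abs_le.1 hx).1]

theorem clamp_neg (hr : 0 ≤ r) (x : ℝ) : clamp r (-x) = -clamp r x := by
  grind [clamp]

theorem abs_clamp_le (hr : 0 ≤ r) (x : ℝ) : |clamp r x| ≤ r :=
  abs_le.2 ⟨le_max_left _ _, max_le (by linarith) (min_le_left _ _)⟩

theorem abs_clamp_eq_and_forall_le_abs_of_notMem_Icc (hr : 0 ≤ r) {a b : ℝ} (hx : x ∈ Icc a b)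
    (hclamp : clamp r x ∉ Icc a b) : |clamp r x| = r ∧ ∀ y ∈ Icc a b, r ≤ |y| := by
  rcases le_total |x| r with hinside | houtside
  · exact absurd hx (clamp_of_abs_le hinside ▸ hclamp)
  rcases le_abs'.1 houtside with hxr | hrx
  · rw [clamp_of_le_neg hr hxr] at hclamp ⊢
    have hbr : b < -r := not_le.1 fun hrb => hclamp ⟨hx.1.trans hxr, hrb⟩
    exact ⟨by rw [abs_neg, abs_of_nonneg hr], fun y hy => le_abs'.2 (.inl (hy.2.trans hbr.le))⟩
  · rw [clamp_of_le hr hrx] at hclamp ⊢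
    have hra : r < a := not_le.1 fun har => hclamp ⟨har, hrx.trans hx.2⟩
    exact ⟨abs_of_nonneg hr, fun y hy => le_abs'.2 (.inr (hra.le.trans hy.1))⟩

end Clamp

theorem measurableSet_setOf_le_abs (r : ℝ) : MeasurableSet {x : ℝ | r ≤ |x|} :=
  measurableSet_le measurable_const measurable_norm

theorem locallyIntegrable_indicator_one {X : Type*} [MeasurableSpace X] [TopologicalSpace X]
    {μ : Measure X} [IsLocallyFiniteMeasure μ] {A : Set X} (hA : MeasurableSet A) :
    LocallyIntegrable (A.indicator (1 : X → ℝ)) μ :=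
  (locallyIntegrable_const 1).indicator hA

theorem intervalIntegral_indicator_le_abs {r : ℝ} (hr : 0 ≤ r) {a b : ℝ} (hab : a ≤ b) :
    ∫ x in a..b, {x | r ≤ |x|}.indicator (1 : ℝ → ℝ) x =
      (b - clamp r b) - (a - clamp r a) := by
  have hcompl : {x : ℝ | r ≤ |x|} = (Ioo (-r) r)ᶜ := by
    ext x
    simp [← abs_lt]
  rw [intervalIntegral.integral_of_le hab, integral_indicator_one (measurableSet_setOf_le_abs r),
    hcompl, measureReal_compl measurableSet_Ioo, measureReal_restrict_apply_univ,
    measureReal_congr (ae_restrict_of_ae Ioo_ae_eq_Ioc),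
    measureReal_restrict_apply measurableSet_Ioc, Ioc_inter_Ioc, Real.volume_real_Ioc,
    Real.volume_real_Ioc]
  grind [clamp]

section Quadratic

/- The quadratic `(4 * x ^ 2 - s ^ 2) / (9 * r ^ 2 - 6 * s ^ 2)` is Gauss's majorant
`4 * x ^ 2 / (9 * r ^ 2)` for `s = 0` and has the value `1` at `x = ±r` for `s = ±r`. Minus the
indicator of `{x | r ≤ |x|}`, it has an antiderivative that, for every `|s| ≤ r`, is at most its
value at `s` to the left of `s` and at least that value to the right. -/

variable {r s : ℝ}

theorem nine_sq_sub_six_sq_pos (hr : 0 < r) (hs : |s| ≤ r) : 0 < 9 * r ^ 2 - 6 * s ^ 2 := by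
  have hsq : s ^ 2 ≤ r ^ 2 := sq_le_sq' (abs_le.1 hs).1 (abs_le.1 hs).2
  nlinarith [pow_pos hr 2]

theorem pow_three_le_cubic_sub_of_le (hr : 0 < r) (hs : |s| ≤ r) {x : ℝ} (hx : r ≤ x) :
    s ^ 3 ≤ 4 * x ^ 3 - 3 * s ^ 2 * x - 3 * (9 * r ^ 2 - 6 * s ^ 2) * (x - r) := by
  have hsr : s ≤ r := (abs_le.1 hs).2
  have hsq : s ^ 2 ≤ r ^ 2 := sq_le_sq' (abs_le.1 hs).1 hsr
  -- Interpolate, with weight `s ^ 2`, between the extreme cases `s = 0` and `s = r`.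
  have hinterp : r ^ 2 * (4 * x ^ 3 - 3 * s ^ 2 * x - 3 * (9 * r ^ 2 - 6 * s ^ 2) * (x - r) - s ^ 3)
      = (r ^ 2 - s ^ 2) * (4 * (x - 3 / 2 * r) ^ 2 * (x + 3 * r))
        + s ^ 2 * (4 * (x - r) ^ 2 * (x + 2 * r)) + r ^ 2 * s ^ 2 * (r - s) := by ring
  have hnonneg : 0 ≤ (r ^ 2 - s ^ 2) * (4 * (x - 3 / 2 * r) ^ 2 * (x + 3 * r))
      + s ^ 2 * (4 * (x - r) ^ 2 * (x + 2 * r)) + r ^ 2 * s ^ 2 * (r - s) := by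
    have hx0 : 0 ≤ x := hr.le.trans hx
    have := sub_nonneg.2 hsq
    have := sub_nonneg.2 hsr
    positivity
  rw [← hinterp] at hnonneg
  exact sub_nonneg.1 (nonneg_of_mul_nonneg_right hnonneg (by positivity))

theorem pow_three_le_cubic_sub_clamp (hr : 0 < r) (hs : |s| ≤ r) {x : ℝ} (hx : s ≤ x) :
    s ^ 3 ≤ 4 * x ^ 3 - 3 * s ^ 2 * x - 3 * (9 * r ^ 2 - 6 * s ^ 2) * (x - clamp r x) := by
  rcases le_or_gt r x with hrx | hxr
  · rw [clamp_of_le hr.le hrx]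
    exact pow_three_le_cubic_sub_of_le hr hs hrx
  · have hfactor : 4 * x ^ 3 - 3 * s ^ 2 * x = s ^ 3 + (x - s) * (2 * x + s) ^ 2 := by ring
    rw [clamp_of_abs_le (abs_le.2 ⟨(abs_le.1 hs).1.trans hx, hxr.le⟩), sub_self, mul_zero, sub_zero,
      hfactor]
    exact le_add_of_nonneg_right (mul_nonneg (sub_nonneg.2 hx) (sq_nonneg _))

theorem cubic_sub_clamp_le_pow_three (hr : 0 < r) (hs : |s| ≤ r) {x : ℝ} (hx : x ≤ s) :
    4 * x ^ 3 - 3 * s ^ 2 * x - 3 * (9 * r ^ 2 - 6 * s ^ 2) * (x - clamp r x) ≤ s ^ 3 := by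
  have hreflect := pow_three_le_cubic_sub_clamp hr ((abs_neg s).trans_le hs) (neg_le_neg hx)
  rw [clamp_neg hr.le] at hreflect
  linarith

theorem intervalIntegral_quadratic (s D a b : ℝ) :
    ∫ x in a..b, (4 * x ^ 2 - s ^ 2) / D =
      ((4 * b ^ 3 - 3 * s ^ 2 * b) - (4 * a ^ 3 - 3 * s ^ 2 * a)) / (3 * D) := by
  rw [intervalIntegral.integral_div, intervalIntegral.integral_sub
    (Continuous.intervalIntegrable (by fun_prop) _ _) intervalIntegrable_const,
    intervalIntegral.integral_const_mul, integral_pow, intervalIntegral.integral_const,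
    smul_eq_mul]
  ring

theorem intervalIntegral_indicator_le_abs_le_of_mem (hr : 0 < r) (hs : |s| ≤ r) {a b : ℝ}
    (ha : a ≤ s) (hb : s ≤ b) :
    ∫ x in a..b, {x | r ≤ |x|}.indicator (1 : ℝ → ℝ) x ≤
      ∫ x in a..b, (4 * x ^ 2 - s ^ 2) / (9 * r ^ 2 - 6 * s ^ 2) := by
  have hD := nine_sq_sub_six_sq_pos hr hs
  rw [intervalIntegral_indicator_le_abs hr.le (ha.trans hb), intervalIntegral_quadratic,
    le_div_iff₀ (by positivity)]
  linarith [pow_three_le_cubic_sub_clamp hr hs hb, cubic_sub_clamp_le_pow_three hr hs ha]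

theorem one_le_quadratic_of_le_abs (hr : 0 < r) (hs : |s| = r) {x : ℝ} (hx : r ≤ |x|) :
    1 ≤ (4 * x ^ 2 - s ^ 2) / (9 * r ^ 2 - 6 * s ^ 2) := by
  have hsq : s ^ 2 = r ^ 2 := by rw [← hs, sq_abs]
  rw [one_le_div (nine_sq_sub_six_sq_pos hr hs.le), hsq]
  nlinarith [sq_le_sq₀ hr.le (abs_nonneg x) |>.2 hx, sq_abs x]

theorem intervalIntegral_indicator_le_abs_le_of_forall_le_abs (hr : 0 < r) (hs : |s| = r)
    {a b : ℝ} (hab : a ≤ b) (hout : ∀ x ∈ Icc a b, r ≤ |x|) :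
    ∫ x in a..b, {x | r ≤ |x|}.indicator (1 : ℝ → ℝ) x ≤
      ∫ x in a..b, (4 * x ^ 2 - s ^ 2) / (9 * r ^ 2 - 6 * s ^ 2) := by
  refine intervalIntegral.integral_mono_on hab
    (intervalIntegrable_of_locallyIntegrable
      (locallyIntegrable_indicator_one (measurableSet_setOf_le_abs r)) a b)
    (Continuous.intervalIntegrable (by fun_prop) _ _) fun x hx => ?_
  have hmem : x ∈ {x | r ≤ |x|} := hout x hx
  rw [indicator_of_mem hmem]
  exact one_le_quadratic_of_le_abs hr hs (hout x hx)

theorem intervalIntegral_indicator_le_abs_le (hr : 0 < r) {m a b : ℝ} (ha : a ≤ m) (hb : m ≤ b) :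
    ∫ x in a..b, {x | r ≤ |x|}.indicator (1 : ℝ → ℝ) x ≤
      ∫ x in a..b, (4 * x ^ 2 - clamp r m ^ 2) / (9 * r ^ 2 - 6 * clamp r m ^ 2) := by
  by_cases hmem : clamp r m ∈ Icc a b
  · exact intervalIntegral_indicator_le_abs_le_of_mem hr (abs_clamp_le hr.le m) hmem.1 hmem.2
  · obtain ⟨habs, hout⟩ := abs_clamp_eq_and_forall_le_abs_of_notMem_Icc hr.le ⟨ha, hb⟩ hmem
    exact intervalIntegral_indicator_le_abs_le_of_forall_le_abs hr habs (ha.trans hb) hout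

theorem quadratic_div_le_max (hr : 0 < r) (hs : |s| ≤ r) (v : ℝ) :
    (4 * v - s ^ 2) / (9 * r ^ 2 - 6 * s ^ 2) ≤
      max (4 * v / (9 * r ^ 2)) ((4 * v - r ^ 2) / (3 * r ^ 2)) := by
  set M := max (4 * v / (9 * r ^ 2)) ((4 * v - r ^ 2) / (3 * r ^ 2))
  have hgauss : 4 * v ≤ M * (9 * r ^ 2) := (div_le_iff₀ (by positivity)).1 (le_max_left _ _)
  have houter : 4 * v - r ^ 2 ≤ M * (3 * r ^ 2) :=
    (div_le_iff₀ (by positivity)).1 (le_max_right _ _)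
  have hsq : s ^ 2 ≤ r ^ 2 := sq_le_sq' (abs_le.1 hs).1 (abs_le.1 hs).2
  rw [div_le_iff₀ (nine_sq_sub_six_sq_pos hr hs)]
  refine le_of_mul_le_mul_left ?_ (pow_pos hr 2)
  calc r ^ 2 * (4 * v - s ^ 2)
      = (r ^ 2 - s ^ 2) * (4 * v) + s ^ 2 * (4 * v - r ^ 2) := by ring
    _ ≤ (r ^ 2 - s ^ 2) * (M * (9 * r ^ 2)) + s ^ 2 * (M * (3 * r ^ 2)) := by
        gcongr
    _ = r ^ 2 * (M * (9 * r ^ 2 - 6 * s ^ 2)) := by ring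

end Quadratic

namespace IsUnimodalWithMode

variable {P : Measure ℝ} [IsProbabilityMeasure P] {m : ℝ}

theorem measureReal_le_abs_sub_le_quadratic (hP : IsUnimodalWithMode P m) (hL2 : MemLp id 2 P)
    (c : ℝ) {r : ℝ} (hr : 0 < r) :
    P.real {x | r ≤ |x - c|} ≤
      (4 * (∫ x, (x - c) ^ 2 ∂P) - clamp r (m - c) ^ 2) /
        (9 * r ^ 2 - 6 * clamp r (m - c) ^ 2) := by
  set s := clamp r (m - c)
  have hA : MeasurableSet {x : ℝ | r ≤ |x - c|} :=
    measurable_sub_const c (measurableSet_setOf_le_abs r)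
  have hsq : Integrable (fun x => (x - c) ^ 2) P := (hL2.sub (memLp_const c)).integrable_sq
  have hcompare : ∫ x, {x | r ≤ |x - c|}.indicator (1 : ℝ → ℝ) x ∂P ≤
      ∫ x, (4 * (x - c) ^ 2 - s ^ 2) / (9 * r ^ 2 - 6 * s ^ 2) ∂P := by
    refine hP.integral_mono (locallyIntegrable_indicator_one hA)
      (Continuous.locallyIntegrable (by fun_prop)) ((integrable_const 1).indicator hA)
      (((hsq.const_mul 4).sub (integrable_const _)).div_const _) fun a ha b hb => ?_
    have hshift := intervalIntegral_indicator_le_abs_le hr (sub_le_sub_right ha c)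
      (sub_le_sub_right hb c)
    rwa [← intervalIntegral.integral_comp_sub_right, ← intervalIntegral.integral_comp_sub_right]
      at hshift
  rwa [integral_indicator_one hA, integral_div, integral_sub (hsq.const_mul 4) (integrable_const _),
    integral_const_mul, integral_const, probReal_univ, one_smul] at hcompare

theorem vysochanskij_petunin (hP : IsUnimodalWithMode P m) (hL2 : MemLp id 2 P)
    (c : ℝ) {r : ℝ} (hr : 0 < r) :
    P.real {x | r ≤ |x - c|} ≤
      max (4 * (∫ x, (x - c) ^ 2 ∂P) / (9 * r ^ 2))
        ((4 * (∫ x, (x - c) ^ 2 ∂P) - r ^ 2) / (3 * r ^ 2)) :=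
  (hP.measureReal_le_abs_sub_le_quadratic hL2 c hr).trans
    (quadratic_div_le_max hr (abs_clamp_le hr.le _) _)

end IsUnimodalWithMode

theorem integral_sub_sq_eq_variance_add_sq {Ω : Type*} [MeasurableSpace Ω] {μ : Measure Ω}
    [IsProbabilityMeasure μ] {X : Ω → ℝ} (hX : MemLp X 2 μ) (c : ℝ) :
    ∫ ω, (X ω - c) ^ 2 ∂μ = Var[X; μ] + (μ[X] - c) ^ 2 := by
  have hvar : Var[fun ω => X ω - c; μ] = (∫ ω, (X ω - c) ^ 2 ∂μ) - (∫ ω, (X ω - c) ∂μ) ^ 2 :=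
    variance_eq_sub (hX.sub (memLp_const c))
  rw [variance_sub_const hX.aestronglyMeasurable,
    integral_sub (hX.integrable one_le_two) (integrable_const c), integral_const, probReal_univ,
    one_smul] at hvar
  linarith

theorem IsUnimodalWithMode.one_sided_vysochanskij_petunin {P : Measure ℝ}
    [IsProbabilityMeasure P] {m : ℝ} (hP : IsUnimodalWithMode P m) (hL2 : MemLp id 2 P)
    {t : ℝ} (ht : 0 < t) :
    P.real (Ici ((∫ x, x ∂P) + t)) ≤
      max ((4 / 9) * Var[id; P] / (Var[id; P] + t ^ 2))
        (1 - (4 / 3) * t ^ 2 / (Var[id; P] + t ^ 2)) := by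
  set μ := ∫ x, x ∂P with hμ
  set v := Var[id; P]
  have hv : 0 ≤ v := variance_nonneg _ _
  have hr : 0 < t + v / t := by positivity
  have hsub : Ici (μ + t) ⊆ {x | t + v / t ≤ |x - (μ - v / t)|} := fun x (hx : μ + t ≤ x) =>
    calc t + v / t ≤ x - (μ - v / t) := by linarith
      _ ≤ |x - (μ - v / t)| := le_abs_self _
  have hmoment : ∫ x, (x - (μ - v / t)) ^ 2 ∂P = v + (v / t) ^ 2 := by
    have hsteiner := integral_sub_sq_eq_variance_add_sq hL2 (μ - v / t)
    simpa only [id_eq, ← hμ, sub_sub_cancel] using hsteiner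
  refine (measureReal_mono hsub).trans
    ((hP.vysochanskij_petunin hL2 (μ - v / t) hr).trans_eq ?_)
  rw [hmoment]
  congr 1 <;> field_simp <;> ring

/-- **One-sided Vysochanskij–Petunin inequality (small-threshold branch).** If `X` is a real
random variable (given by its law `P`) whose distribution is unimodal with some mode `m`, with
mean `0` and variance `1`, then for every `0 ≤ k < √(5/3)`,
`P[X ≥ k] ≤ 1 - (4/3) k² / (1 + k²)`. -/
theorem one_sided_vysochanskij_petunin_small
    (P : Measure ℝ) [IsProbabilityMeasure P] (m : ℝ)
    (hU : IsUnimodalWithMode P m)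
    (hInt : Integrable (fun x => x ^ 2) P)
    (hmean : (∫ x, x ∂P) = 0) (hvar : (∫ x, x ^ 2 ∂P) = 1)
    (k : ℝ) (hk0 : 0 ≤ k) (hk : k < Real.sqrt (5 / 3)) :
    (P (Set.Ici k)).toReal ≤ 1 - (4 / 3) * k ^ 2 / (1 + k ^ 2) := by
  rcases hk0.eq_or_lt with rfl | hkpos
  · simpa [measureReal_def] using measureReal_le_one (μ := P) (s := Ici 0)
  have hL2 : MemLp id 2 P := (memLp_two_iff_integrable_sq aestronglyMeasurable_id).2 hInt
  have hVar : Var[id; P] = 1 := (variance_of_integral_eq_zero aemeasurable_id hmean).trans hvar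
  have hkey := hU.one_sided_vysochanskij_petunin hL2 hkpos
  rw [hmean, hVar, zero_add] at hkey
  refine hkey.trans (max_le ?_ le_rfl)
  have hk2 : k ^ 2 < 5 / 3 := (Real.lt_sqrt hk0).1 hk
  rw [div_le_iff₀ (by positivity), sub_mul, div_mul_cancel₀ _ (by positivity)]
  linarith
end

section
/- For every k ≥ 2/√3 and every η > 0 there exists a real random variable X that is symmetric about 0, whose distribution is unimodal with mode 0, with E[X²] = 1, such that the probability that |X| ≥ k exceeds 4/(9k²) - η. (Hence the supremum of P[|X| ≥ k] over symmetric unimodal distributions with unit second moment about the mode equals 4/(9k²) for k ≥ 2/√3, i.e., Gauss's inequality is sharp.) -/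
open MeasureTheory

/-!
Gauss's bound is attained by a mixture of an atom at the mode and the uniform law on `[-b, b]`
with `b = 3k/2`: the uniform part has second moment `b² / 3` and puts a third of its mass outside
`(-k, k)`, so unit second moment forces the weight `3 / b²` and the tail `1 / b² = 4 / (9k²)`.
An atom has no density, so it is replaced by the uniform law on a short interval `[-c, c]`, which
costs at most `c² / 9` in the tail. The weight `3 / b²` is at most `1` exactly when `2 / √3 ≤ k`.
-/

open Set ProbabilityTheory
open scoped ENNReal unitInterval

section Mixture

variable {α β : Type*} [MeasurableSpace α] [MeasurableSpace β]
variable {μ ν : Measure α} {μ' ν' : Measure β}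

/-- The mixture `p μ + (1 - p) ν` of two measures, with the weight `p` bundled as an element of
the unit interval. -/
noncomputable def mixture (p : I) (μ ν : Measure α) : Measure α :=
  unitInterval.toNNReal p • μ + unitInterval.toNNReal (σ p) • ν

instance isProbabilityMeasure_mixture (p : I) [IsProbabilityMeasure μ] [IsProbabilityMeasure ν] :
    IsProbabilityMeasure (mixture p μ ν) := by
  unfold mixture
  infer_instance

theorem measurePreserving_mixture (p : I) {f : α → β} (hμ : MeasurePreserving f μ μ')
    (hν : MeasurePreserving f ν ν') :
    MeasurePreserving f (mixture p μ ν) (mixture p μ' ν') :=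
  (hμ.smul_measure _).add_measure (hν.smul_measure _)

theorem integrable_mixture {E : Type*} [NormedAddCommGroup E] (p : I) {f : α → E}
    (hμ : Integrable f μ) (hν : Integrable f ν) : Integrable f (mixture p μ ν) :=
  hμ.smul_measure_nnreal.add_measure hν.smul_measure_nnreal

theorem integral_mixture {E : Type*} [NormedAddCommGroup E] [NormedSpace ℝ E] (p : I) {f : α → E}
    (hμ : Integrable f μ) (hν : Integrable f ν) :
    ∫ x, f x ∂(mixture p μ ν) = (p : ℝ) • ∫ x, f x ∂μ + (1 - p : ℝ) • ∫ x, f x ∂ν := by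
  rw [mixture, integral_add_measure hμ.smul_measure_nnreal hν.smul_measure_nnreal,
    integral_smul_nnreal_measure, integral_smul_nnreal_measure]
  rfl

theorem mul_real_le_mixture_real (p : I) [IsFiniteMeasure μ] [IsFiniteMeasure ν] (s : Set α) :
    p * μ.real s ≤ (mixture p μ ν).real s := by
  rw [mixture, measureReal_add_apply, measureReal_nnreal_smul_apply]
  exact le_add_of_nonneg_right measureReal_nonneg

theorem exists_unitInterval_mul_add_eq {x y z : ℝ} (hxy : x ≤ y) (hyz : y ≤ z) :
    ∃ p : I, p * z + (1 - p) * x = y := by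
  have hy : y ∈ segment ℝ x z := (segment_eq_Icc (hxy.trans hyz)).symm ▸ ⟨hxy, hyz⟩
  rw [segment_eq_image] at hy
  obtain ⟨p, hp, hpy⟩ := hy
  exact ⟨⟨p, hp⟩, (add_comm _ _).trans hpy⟩

theorem sub_div_le_of_mul_add_one_sub_mul_eq {p x y z : ℝ} (hp : 0 ≤ p) (hx : 0 ≤ x) (hz : 0 < z)
    (h : p * z + (1 - p) * x = y) : (y - x) / z ≤ p := by
  rw [div_le_iff₀ hz]
  linarith [mul_nonneg hp hx]

end Mixture

section Conditioning

variable {α β : Type*} [MeasurableSpace α] [MeasurableSpace β] {μ : Measure α} {ν : Measure β}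

theorem measurePreserving_cond_preimage {f : α → β} (hf : MeasurePreserving f μ ν) {s : Set β}
    (hs : MeasurableSet s) : MeasurePreserving f μ[|f ⁻¹' s] ν[|s] := by
  unfold ProbabilityTheory.cond
  rw [hf.measure_preimage hs.nullMeasurableSet]
  exact (hf.restrict_preimage hs).smul_measure _

theorem integrable_cond_of_integrableOn {E : Type*} [NormedAddCommGroup E] {f : α → E} {s : Set α}
    (hf : IntegrableOn f s μ) : Integrable f μ[|s] := by
  rcases eq_or_ne (μ s) 0 with hs | hs
  · rw [cond_eq_zero_of_meas_eq_zero hs]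
    exact integrable_zero_measure
  · exact hf.smul_measure (ENNReal.inv_ne_top.2 hs)

end Conditioning

section Unimodal

theorem measurable_of_monotoneOn_Iic_of_antitoneOn_Ici {α β : Type*}
    [LinearOrder α] [TopologicalSpace α] [OrderClosedTopology α] [SecondCountableTopology α]
    [MeasurableSpace α] [BorelSpace α]
    [LinearOrder β] [TopologicalSpace β] [OrderTopology β] [SecondCountableTopology β]
    [MeasurableSpace β] [BorelSpace β] {f : α → β} {m : α}
    (hmono : MonotoneOn f (Iic m)) (hanti : AntitoneOn f (Ici m)) : Measurable f := by
  refine measurable_of_Ioi fun t => OrdConnected.measurableSet ⟨fun x hx y hy z hz => ?_⟩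
  rcases le_total z m with hzm | hmz
  · exact lt_of_lt_of_le hx (hmono (hz.1.trans hzm) hzm hz.1)
  · exact lt_of_lt_of_le hy (hanti hmz (hmz.trans hz.2) hz.2)

variable {P Q : Measure ℝ} {m : ℝ} {s : Set ℝ}

theorem IsUnimodalWithMode.add (hP : IsUnimodalWithMode P m) (hQ : IsUnimodalWithMode Q m) :
    IsUnimodalWithMode (P + Q) m := by
  obtain ⟨f, rfl, hf_mono, hf_anti⟩ := hP
  obtain ⟨g, rfl, hg_mono, hg_anti⟩ := hQ
  have hf := measurable_of_monotoneOn_Iic_of_antitoneOn_Ici hf_mono hf_anti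
  exact ⟨f + g, (withDensity_add_left hf g).symm, hf_mono.add hg_mono, hf_anti.add hg_anti⟩

theorem IsUnimodalWithMode.smul (hP : IsUnimodalWithMode P m) (c : ℝ≥0∞) :
    IsUnimodalWithMode (c • P) m := by
  obtain ⟨f, rfl, hf_mono, hf_anti⟩ := hP
  have hf := measurable_of_monotoneOn_Iic_of_antitoneOn_Ici hf_mono hf_anti
  exact ⟨c • f, (withDensity_smul c hf).symm,
    fun _ hx _ hy hxy => mul_le_mul_right (hf_mono hx hy hxy) c,
    fun _ hx _ hy hxy => mul_le_mul_right (hf_anti hx hy hxy) c⟩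

theorem IsUnimodalWithMode.mixture (hP : IsUnimodalWithMode P m) (hQ : IsUnimodalWithMode Q m)
    (p : I) : IsUnimodalWithMode (mixture p P Q) m :=
  (hP.smul (unitInterval.toNNReal p)).add (hQ.smul (unitInterval.toNNReal (σ p)))

theorem isUnimodalWithMode_volume_restrict (hs : s.OrdConnected) (hm : m ∈ s) :
    IsUnimodalWithMode (volume.restrict s) m := by
  have hle {x y : ℝ} (hxy : x ∈ s → y ∈ s) : s.indicator (1 : ℝ → ℝ≥0∞) x ≤ s.indicator 1 y :=
    indicator_apply_le' (fun hx => (indicator_of_mem (hxy hx) 1).ge) fun _ => zero_le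
  exact ⟨s.indicator 1, (withDensity_indicator_one hs.measurableSet).symm,
    fun x _ y hy hxy => hle fun hxs => hs.out hxs hm ⟨hxy, hy⟩,
    fun x hx y _ hxy => hle fun hys => hs.out hm hys ⟨hx, hxy⟩⟩

theorem isUnimodalWithMode_volume_cond (hs : s.OrdConnected) (hm : m ∈ s) :
    IsUnimodalWithMode volume[|s] m :=
  (isUnimodalWithMode_volume_restrict hs hm).smul _

end Unimodal

section Uniform

variable {a b k : ℝ}

theorem isProbabilityMeasure_volume_cond_Icc (hab : a < b) :
    IsProbabilityMeasure (volume : Measure ℝ)[|Icc a b] :=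
  cond_isProbabilityMeasure_of_finite (by simp [hab]) (by simp)

theorem integrable_pow_volume_cond_Icc (n : ℕ) :
    Integrable (fun x : ℝ => x ^ n) volume[|Icc a b] :=
  integrable_cond_of_integrableOn (continuous_pow n).continuousOn.integrableOn_Icc

theorem integral_pow_volume_cond_Icc (hab : a ≤ b) (n : ℕ) :
    ∫ x : ℝ, x ^ n ∂volume[|Icc a b] =
      (b ^ (n + 1) - a ^ (n + 1)) / ((n + 1) * (b - a)) := by
  rw [ProbabilityTheory.cond, integral_smul_measure, ENNReal.toReal_inv, ← measureReal_def,
    Real.volume_real_Icc_of_le hab, integral_Icc_eq_integral_Ioc,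
    ← intervalIntegral.integral_of_le hab, integral_pow, smul_eq_mul, inv_mul_eq_div, div_div]

theorem integral_sq_volume_cond_Icc_neg_self (hb : 0 < b) :
    ∫ x : ℝ, x ^ 2 ∂volume[|Icc (-b) b] = b ^ 2 / 3 := by
  rw [integral_pow_volume_cond_Icc (neg_le_self hb.le)]
  field_simp
  ring

theorem measurePreserving_neg_volume_cond_Icc_neg_self (b : ℝ) :
    MeasurePreserving (fun x : ℝ => -x) volume[|Icc (-b) b] volume[|Icc (-b) b] := by
  have hpre : (fun x : ℝ => -x) ⁻¹' Icc (-b) b = Icc (-b) b := by simp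
  simpa only [hpre] using
    measurePreserving_cond_preimage (Measure.measurePreserving_neg (volume : Measure ℝ))
      (measurableSet_Icc (a := -b) (b := b))

theorem volume_cond_Icc_neg_self_real_le_abs (hk : 0 ≤ k) (hkb : k ≤ b) (hb : 0 < b) :
    (volume : Measure ℝ)[|Icc (-b) b].real {x | k ≤ |x|} = 1 - k / b := by
  have := isProbabilityMeasure_volume_cond_Icc (neg_lt_self hb)
  have htail : {x : ℝ | k ≤ |x|} = (Ioo (-k) k)ᶜ := by
    ext x
    simp only [mem_ofPred_eq, mem_compl_iff, mem_Ioo, ← abs_lt, not_lt]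
  have hsub : Ioo (-k) k ⊆ Icc (-b) b :=
    Ioo_subset_Icc_self.trans (Icc_subset_Icc (neg_le_neg hkb) hkb)
  rw [htail, probReal_compl_eq_one_sub measurableSet_Ioo, measureReal_def,
    cond_apply measurableSet_Icc, inter_eq_right.2 hsub, ENNReal.toReal_mul, ENNReal.toReal_inv,
    ← measureReal_def, ← measureReal_def, Real.volume_real_Icc_of_le (by linarith),
    Real.volume_real_Ioo_of_le (by linarith)]
  field_simp

end Uniform

section UniformMixture

variable {b c k v : ℝ}

/-- The symmetric law that is uniform on `[-b, b]` with probability `p` and uniform on `[-c, c]`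
otherwise. With `c` small it approximates the extremal law of Gauss's inequality. -/
noncomputable def uniformMixture (p : I) (b c : ℝ) : Measure ℝ :=
  mixture p volume[|Icc (-b) b] volume[|Icc (-c) c]

theorem isProbabilityMeasure_uniformMixture (hb : 0 < b) (hc : 0 < c) (p : I) :
    IsProbabilityMeasure (uniformMixture p b c) :=
  have := isProbabilityMeasure_volume_cond_Icc (neg_lt_self hb)
  have := isProbabilityMeasure_volume_cond_Icc (neg_lt_self hc)
  isProbabilityMeasure_mixture p

theorem map_neg_uniformMixture (p : I) (b c : ℝ) :
    (uniformMixture p b c).map (fun x => -x) = uniformMixture p b c :=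
  (measurePreserving_mixture p (measurePreserving_neg_volume_cond_Icc_neg_self b)
    (measurePreserving_neg_volume_cond_Icc_neg_self c)).map_eq

theorem isUnimodalWithMode_uniformMixture (hb : 0 ≤ b) (hc : 0 ≤ c) (p : I) :
    IsUnimodalWithMode (uniformMixture p b c) 0 :=
  (isUnimodalWithMode_volume_cond ordConnected_Icc ⟨neg_nonpos.2 hb, hb⟩).mixture
    (isUnimodalWithMode_volume_cond ordConnected_Icc ⟨neg_nonpos.2 hc, hc⟩) p

theorem integrable_pow_uniformMixture (p : I) (b c : ℝ) (n : ℕ) :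
    Integrable (fun x => x ^ n) (uniformMixture p b c) :=
  integrable_mixture p (integrable_pow_volume_cond_Icc n) (integrable_pow_volume_cond_Icc n)

theorem integral_sq_uniformMixture (hb : 0 < b) (hc : 0 < c) (p : I) :
    ∫ x, x ^ 2 ∂(uniformMixture p b c) = (p * b ^ 2 + (1 - p) * c ^ 2) / 3 := by
  rw [uniformMixture,
    integral_mixture p (integrable_pow_volume_cond_Icc 2) (integrable_pow_volume_cond_Icc 2),
    integral_sq_volume_cond_Icc_neg_self hb, integral_sq_volume_cond_Icc_neg_self hc,
    smul_eq_mul, smul_eq_mul]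
  ring

theorem mul_one_sub_div_le_uniformMixture_real_le_abs (hk : 0 ≤ k) (hkb : k ≤ b) (hb : 0 < b)
    (p : I) : p * (1 - k / b) ≤ (uniformMixture p b c).real {x | k ≤ |x|} := by
  rw [← volume_cond_Icc_neg_self_real_le_abs hk hkb hb]
  exact mul_real_le_mixture_real p _

theorem exists_uniformMixture_integral_sq_eq_and_le_real_le_abs (hc : 0 < c) (hb : 0 < b)
    (hcv : c ^ 2 / 3 ≤ v) (hvb : v ≤ b ^ 2 / 3) (hk : 0 ≤ k) (hkb : k ≤ b) :
    ∃ p : I, ∫ x, x ^ 2 ∂(uniformMixture p b c) = v ∧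
      (3 * v - c ^ 2) / b ^ 2 * (1 - k / b) ≤ (uniformMixture p b c).real {x | k ≤ |x|} := by
  obtain ⟨p, hp⟩ : ∃ p : I, p * b ^ 2 + (1 - p) * c ^ 2 = 3 * v :=
    exists_unitInterval_mul_add_eq (by linarith) (by linarith)
  have hweight : (3 * v - c ^ 2) / b ^ 2 ≤ p :=
    sub_div_le_of_mul_add_one_sub_mul_eq p.2.1 (sq_nonneg c) (by positivity) hp
  refine ⟨p, ?_, ?_⟩
  · rw [integral_sq_uniformMixture hb hc, hp, mul_div_cancel_left₀ v three_ne_zero]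
  · calc (3 * v - c ^ 2) / b ^ 2 * (1 - k / b)
        ≤ p * (1 - k / b) :=
          mul_le_mul_of_nonneg_right hweight (sub_nonneg.2 (div_le_one_of_le₀ hkb hb.le))
      _ ≤ _ := mul_one_sub_div_le_uniformMixture_real_le_abs hk hkb hb p

end UniformMixture

theorem four_div_sub_sq_div_nine_le {k : ℝ} (hk : 4 / 3 ≤ k ^ 2) (c : ℝ) :
    4 / (9 * k ^ 2) - c ^ 2 / 9 ≤
      (3 - c ^ 2) / (3 * k / 2) ^ 2 * (1 - k / (3 * k / 2)) := by
  have hk0 : k ≠ 0 := by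
    rintro rfl
    norm_num at hk
  have hrecip : 4 / (3 * k ^ 2) ≤ 1 := div_le_one_of_le₀ (by linarith) (by positivity)
  calc 4 / (9 * k ^ 2) - c ^ 2 / 9
      ≤ 4 / (9 * k ^ 2) - c ^ 2 / 9 * (4 / (3 * k ^ 2)) :=
        sub_le_sub_left (mul_le_of_le_one_right (by positivity) hrecip) _
    _ = (3 - c ^ 2) / (3 * k / 2) ^ 2 * (1 - k / (3 * k / 2)) := by
        field_simp
        ring

/-- **Sharpness of Gauss's inequality.** For every `k ≥ 2/√3` and `η > 0` there is a real
random variable (given by its law `P`) symmetric about `0`, unimodal with mode `0`, with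
`E[X²] = 1`, such that `P[|X| ≥ k] > 4/(9k²) - η`. -/
theorem gauss_inequality_sharp
    (k : ℝ) (hk : 2 / Real.sqrt 3 ≤ k) (η : ℝ) (hη : 0 < η) :
    ∃ P : Measure ℝ, IsProbabilityMeasure P ∧
      P.map (fun x => -x) = P ∧
      IsUnimodalWithMode P 0 ∧
      Integrable (fun x => x ^ 2) P ∧
      (∫ x, x ^ 2 ∂P) = 1 ∧
      4 / (9 * k ^ 2) - η < (P {x | k ≤ |x|}).toReal := by
  have hk0 : 0 < k := lt_of_lt_of_le (by positivity) hk
  have hk2 : 4 / 3 ≤ k ^ 2 := by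
    have hsq := pow_le_pow_left₀ (by positivity) hk 2
    rw [div_pow, Real.sq_sqrt zero_le_three] at hsq
    linarith
  obtain ⟨c, hc0, hc3, hcη⟩ : ∃ c : ℝ, 0 < c ∧ c ^ 2 ≤ 3 ∧ c ^ 2 ≤ η := by
    have hmin : 0 < min 3 η := lt_min three_pos hη
    refine ⟨√(min 3 η), Real.sqrt_pos.2 hmin, ?_⟩
    rw [Real.sq_sqrt hmin.le]
    exact ⟨min_le_left _ _, min_le_right _ _⟩
  have hb0 : 0 < 3 * k / 2 := by linarith
  obtain ⟨p, hmoment, htail⟩ := exists_uniformMixture_integral_sq_eq_and_le_real_le_abs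
    (v := 1) hc0 hb0 (by linarith) (by linarith) hk0.le (show k ≤ 3 * k / 2 by linarith)
  rw [mul_one] at htail
  refine ⟨uniformMixture p (3 * k / 2) c, isProbabilityMeasure_uniformMixture hb0 hc0 p,
    map_neg_uniformMixture .., isUnimodalWithMode_uniformMixture hb0.le hc0.le p,
    integrable_pow_uniformMixture .., hmoment, ?_⟩
  calc 4 / (9 * k ^ 2) - η < 4 / (9 * k ^ 2) - c ^ 2 / 9 := by linarith
    _ ≤ _ := four_div_sub_sq_div_nine_le hk2 c
    _ ≤ _ := htail
end
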